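/- arXiv:2602.10857 — 2 statements merged into one kernel-verified Lean document; each statement's English description precedes it below -/
import Mathlib

section
/- Suppose there exists φ : ℕ → ℝ_{>0} such that the rate function u satisfies u(m,n) = φ(n) for all m ≥ 1, n ≥ 0 (and u(0,n) = 0). Then for every L ≥ 2, N ≥ 1 and every choice of rate parameters x_1,…,x_L > 0, the factorised probability distribution on Ω_{L,N} with one-point function f(x,n) = x^n ∏_{i=1}^{n} φ(i−1) satisfies the master equation of the TALRMP (q = 0) with rate u; i.e., the stationary distribution corresponding to u in the TALRMP is factorised with this one-point function. -/
open scoped Classical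

namespace LRMP

/-- A rate function: `u m n` is positive when the departure site is occupied
(`m ≥ 1`) and zero when it is empty (`m = 0`). -/
def IsRate (u : ℕ → ℕ → ℝ) : Prop :=
  (∀ m n : ℕ, 1 ≤ m → 0 < u m n) ∧ ∀ n : ℕ, u 0 n = 0

/-- The configuration `η^{k,ℓ}`: one particle moved from site `k` to site `ℓ`. -/
def move (L : ℕ) (η : ZMod L → ℕ) (k ℓ : ZMod L) : ZMod L → ℕ :=
  fun a => if a = k then η a - 1 else if a = ℓ then η a + 1 else η a

/-- Every site strictly between `k` and `ℓ`, moving clockwise from `k`, is empty in `η`. -/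
def RightClear (L : ℕ) (η : ZMod L → ℕ) (k ℓ : ZMod L) : Prop :=
  ∀ i : ℕ, 0 < i → i < (ℓ - k).val → η (k + (i : ZMod L)) = 0

/-- Every site strictly between `k` and `ℓ`, moving counterclockwise from `k`, is empty in `η`. -/
def LeftClear (L : ℕ) (η : ZMod L → ℕ) (k ℓ : ZMod L) : Prop :=
  ∀ i : ℕ, 0 < i → i < (k - ℓ).val → η (k - (i : ZMod L)) = 0

/-- The total rate of the transition `η → η^{k,ℓ}` in the PALRMP with rate function `u`,
rate parameters `x` and asymmetry parameter `q`: a clockwise (right) hop contributes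
`x ℓ * u (η k) (η ℓ)` and a counterclockwise (left) hop contributes `q * x ℓ * u (η k) (η ℓ)`. -/
noncomputable def hopRate (L : ℕ) (u : ℕ → ℕ → ℝ) (x : ZMod L → ℝ) (q : ℝ)
    (η : ZMod L → ℕ) (k ℓ : ZMod L) : ℝ :=
  (if k ≠ ℓ ∧ 1 ≤ η k ∧ RightClear L η k ℓ then x ℓ * u (η k) (η ℓ) else 0) +
  (if k ≠ ℓ ∧ 1 ≤ η k ∧ LeftClear L η k ℓ then q * (x ℓ * u (η k) (η ℓ)) else 0)

/-- The incoming probability current into `η`: the sum over pairs `(k, ℓ)` of the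
probability current due to the transition into `η` in which a particle moves from
site `k` to site `ℓ` (coming from the configuration `η^{ℓ,k} = move L η ℓ k`). -/
noncomputable def inflow (L : ℕ) [NeZero L] (u : ℕ → ℕ → ℝ) (x : ZMod L → ℝ) (q : ℝ)
    (π : (ZMod L → ℕ) → ℝ) (η : ZMod L → ℕ) : ℝ :=
  ∑ k : ZMod L, ∑ ℓ : ZMod L,
    if 1 ≤ η ℓ then π (move L η ℓ k) * hopRate L u x q (move L η ℓ k) k ℓ else 0

/-- The outgoing probability current out of `η`. -/
noncomputable def outflow (L : ℕ) [NeZero L] (u : ℕ → ℕ → ℝ) (x : ZMod L → ℝ) (q : ℝ)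
    (π : (ZMod L → ℕ) → ℝ) (η : ZMod L → ℕ) : ℝ :=
  ∑ k : ZMod L, ∑ ℓ : ZMod L, π η * hopRate L u x q η k ℓ

/-- `π` satisfies the master (balance) equation of the PALRMP on `Ω_{L,N}`:
for every configuration `η` with `N` particles, the incoming probability current
equals the outgoing probability current. -/
def IsStationary (L : ℕ) [NeZero L] (N : ℕ) (u : ℕ → ℕ → ℝ) (x : ZMod L → ℝ) (q : ℝ)
    (π : (ZMod L → ℕ) → ℝ) : Prop :=
  ∀ η : ZMod L → ℕ, (∑ a, η a) = N → inflow L u x q π η = outflow L u x q π η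

/-- The stationary distribution corresponding to the rate `u` in the PALRMP with
asymmetry parameter `q` is factorised, with one-point function `f`: for every
`L ≥ 2`, `N ≥ 1` and all positive rate parameters `x`, the factorised distribution
`η ↦ ∏_ℓ f (x ℓ) (η ℓ)` (up to normalisation) is stationary. -/
def FactorisedPALRMP (u : ℕ → ℕ → ℝ) (q : ℝ) (f : ℝ → ℕ → ℝ) : Prop :=
  (∀ (x : ℝ) (n : ℕ), 0 < x → 0 < f x n) ∧
  ∀ (L N : ℕ) [NeZero L], 2 ≤ L → 1 ≤ N →
    ∀ x : ZMod L → ℝ, (∀ ℓ, 0 < x ℓ) →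
      IsStationary L N u x q (fun η => ∏ ℓ, f (x ℓ) (η ℓ))

/-- The stationary distribution corresponding to the rate `u` in the homogeneous
PALRMP (all rate parameters equal to `1`) with asymmetry parameter `q` is factorised,
with one-point function `f`. -/
def FactorisedHomog (u : ℕ → ℕ → ℝ) (q : ℝ) (f : ℕ → ℝ) : Prop :=
  (∀ n : ℕ, 0 < f n) ∧
  ∀ (L N : ℕ) [NeZero L], 2 ≤ L → 1 ≤ N →
    IsStationary L N u (fun _ => (1 : ℝ)) q (fun η => ∏ ℓ, f (η ℓ))

end LRMP

namespace LRMP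

/-!
The one-point function satisfies `f ℓ (n + 1) = f ℓ n * (x ℓ * φ n)`. As the hop rate depends only
on the target site, both the current into `η` along any hop `k → ℓ` and the current out of `η`
along any hop `j → k` therefore equal `π η * (x k * φ (η k))`.
Hence balance holds site by site:
the hops into `η` that leave `k` correspond to the first occupied sites clockwise of `k`, those
out of `η` that arrive at `k` to the first occupied sites anticlockwise of `k`, and there is
exactly one of each if some site other than `k` is occupied, and none otherwise.
-/

theorem card_filter_forall_le_eq_one {α β : Type*} [LinearOrder β] {s : Finset α}
    (hs : s.Nonempty) {f : α → β} (hf : Set.InjOn f s)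
    [DecidablePred fun a => ∀ b ∈ s, f a ≤ f b] :
    (s.filter fun a => ∀ b ∈ s, f a ≤ f b).card = 1 := by
  obtain ⟨a, ha, hmin⟩ := s.exists_min_image f hs
  refine Finset.card_eq_one.2 ⟨a, Finset.eq_singleton_iff_unique_mem.2 ⟨by simp_all, ?_⟩⟩
  intro b hb
  rw [Finset.mem_filter] at hb
  exact hf hb.1 ha ((hb.2 a ha).antisymm (hmin b hb.1))

section Clearance

variable {L : ℕ} [NeZero L] {η ζ : ZMod L → ℕ} {k ℓ : ZMod L}

theorem val_sub_lt_val {c d : ZMod L} (hd : d ≠ 0) (hdc : d.val < c.val) :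
    (c - d).val < c.val := by
  rw [ZMod.val_sub hdc.le]
  have : 0 < d.val := ZMod.val_pos.2 hd
  lia

theorem rightClear_iff_forall_val_sub_left :
    RightClear L η k ℓ ↔ ∀ b ≠ k, (b - k).val < (ℓ - k).val → η b = 0 := by
  constructor
  · intro h b hb hlt
    simpa using h (b - k).val (ZMod.val_pos.2 (sub_ne_zero.2 hb)) hlt
  · intro h i hi hlt
    have hval : (i : ZMod L).val = i := ZMod.val_cast_of_lt (hlt.trans (ZMod.val_lt _))
    refine h (k + i) ?_ (by rwa [add_sub_cancel_left, hval])
    rw [Ne, add_eq_left, ← ZMod.val_eq_zero, hval]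
    exact hi.ne'

theorem rightClear_iff_forall_val_sub_right :
    RightClear L η k ℓ ↔ ∀ b ≠ ℓ, (ℓ - b).val < (ℓ - k).val → η b = 0 := by
  rw [rightClear_iff_forall_val_sub_left]
  constructor
  · intro h b hb hlt
    refine h b (by rintro rfl; exact hlt.false) ?_
    simpa using val_sub_lt_val (sub_ne_zero.2 hb.symm) hlt
  · intro h b hb hlt
    refine h b (by rintro rfl; exact hlt.false) ?_
    simpa using val_sub_lt_val (sub_ne_zero.2 hb) hlt

theorem rightClear_congr (h : ∀ b, b ≠ k → b ≠ ℓ → η b = ζ b) :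
    RightClear L η k ℓ ↔ RightClear L ζ k ℓ := by
  simp only [rightClear_iff_forall_val_sub_left]
  refine forall₃_congr fun b hbk hlt => ?_
  rw [h b hbk (by rintro rfl; exact hlt.false)]

end Clearance

section NearestOccupied

variable {L : ℕ} [NeZero L] {η : ZMod L → ℕ} {k ℓ : ZMod L}

/-- The occupied sites of `η` other than `a`. -/
def occupiedOthers (L : ℕ) [NeZero L] (η : ZMod L → ℕ) (a : ZMod L) : Finset (ZMod L) :=
  {b | b ≠ a ∧ 1 ≤ η b}

/-- The first occupied site clockwise of `k`, as a finset that is empty if no site other than `k`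
is occupied and a singleton otherwise. The site `k` itself never counts. -/
noncomputable def nextOccupied (L : ℕ) [NeZero L] (η : ZMod L → ℕ) (k : ZMod L) :
    Finset (ZMod L) :=
  {ℓ ∈ occupiedOthers L η k | RightClear L η k ℓ}

/-- The first occupied site anticlockwise of `ℓ`, encoded as a finset like `nextOccupied`: the
only site from which a particle can hop clockwise to `ℓ`. -/
noncomputable def prevOccupied (L : ℕ) [NeZero L] (η : ZMod L → ℕ) (ℓ : ZMod L) :
    Finset (ZMod L) :=
  {k ∈ occupiedOthers L η ℓ | RightClear L η k ℓ}

theorem mem_nextOccupied :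
    ℓ ∈ nextOccupied L η k ↔ (ℓ ≠ k ∧ 1 ≤ η ℓ) ∧ RightClear L η k ℓ := by
  simp [nextOccupied, occupiedOthers]

theorem mem_prevOccupied :
    k ∈ prevOccupied L η ℓ ↔ (k ≠ ℓ ∧ 1 ≤ η k) ∧ RightClear L η k ℓ := by
  simp [prevOccupied, occupiedOthers]

theorem nextOccupied_eq_filter_forall_le (η : ZMod L → ℕ) (k : ZMod L) :
    nextOccupied L η k = {ℓ ∈ occupiedOthers L η k |
      ∀ b ∈ occupiedOthers L η k, (ℓ - k).val ≤ (b - k).val} := by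
  refine Finset.filter_congr fun ℓ _ => ?_
  simp only [rightClear_iff_forall_val_sub_left, occupiedOthers, Finset.mem_filter_univ]
  grind

theorem prevOccupied_eq_filter_forall_le (η : ZMod L → ℕ) (ℓ : ZMod L) :
    prevOccupied L η ℓ = {k ∈ occupiedOthers L η ℓ |
      ∀ b ∈ occupiedOthers L η ℓ, (ℓ - k).val ≤ (ℓ - b).val} := by
  refine Finset.filter_congr fun k _ => ?_
  simp only [rightClear_iff_forall_val_sub_right, occupiedOthers, Finset.mem_filter_univ]
  grind

theorem card_nextOccupied_eq_card_prevOccupied (η : ZMod L → ℕ) (a : ZMod L) :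
    (nextOccupied L η a).card = (prevOccupied L η a).card := by
  rcases (occupiedOthers L η a).eq_empty_or_nonempty with hempty | hne
  · simp [nextOccupied, prevOccupied, hempty]
  · rw [nextOccupied_eq_filter_forall_le, prevOccupied_eq_filter_forall_le]
    have hnext := card_filter_forall_le_eq_one hne
      ((ZMod.val_injective L).comp (sub_left_injective (b := a))).injOn
    have hprev := card_filter_forall_le_eq_one hne
      ((ZMod.val_injective L).comp (sub_right_injective (b := a))).injOn
    simp only [Function.comp_apply] at hnext hprev
    rw [hnext, hprev]

end NearestOccupied

section Move

variable {L : ℕ} (η : ZMod L → ℕ) {k ℓ : ZMod L}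

theorem move_apply_source (k ℓ : ZMod L) :
    move L η k ℓ k = η k - 1 := by
  simp [move]

theorem move_apply_target (h : k ≠ ℓ) :
    move L η k ℓ ℓ = η ℓ + 1 := by
  simp [move, h.symm]

theorem move_apply_of_ne {a : ZMod L} (hk : a ≠ k) (hℓ : a ≠ ℓ) :
    move L η k ℓ a = η a := by
  simp [move, hk, hℓ]

theorem mem_prevOccupied_move [NeZero L] :
    k ∈ prevOccupied L (move L η ℓ k) ℓ ↔ k ≠ ℓ ∧ RightClear L η k ℓ := by
  rw [mem_prevOccupied, and_assoc]
  refine and_congr_right fun hkℓ => ?_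
  rw [move_apply_target η hkℓ.symm,
    rightClear_congr fun b hbk hbℓ => move_apply_of_ne η hbℓ hbk]
  simp

end Move

section ProductWeight

variable {M : Type*} [CommMonoid M]

theorem prod_update_add_one {ι : Type*} [Fintype ι] [DecidableEq ι] {f v : ι → ℕ → M}
    (hf : ∀ a n, f a (n + 1) = f a n * v a n) (ζ : ι → ℕ) (i : ι) :
    ∏ a, f a (Function.update ζ i (ζ i + 1) a) = (∏ a, f a (ζ a)) * v i (ζ i) := by
  simp only [Function.apply_update f]
  rw [Finset.prod_update_of_mem (Finset.mem_univ i), hf, mul_right_comm,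
    Finset.sdiff_singleton_eq_erase,
    Finset.mul_prod_erase _ (fun a => f a (ζ a)) (Finset.mem_univ i)]

theorem prod_move_mul {L : ℕ} [NeZero L] {f v : ZMod L → ℕ → M}
    (hf : ∀ a n, f a (n + 1) = f a n * v a n) {η : ZMod L → ℕ} {k ℓ : ZMod L}
    (hkℓ : k ≠ ℓ) (hℓ : 1 ≤ η ℓ) :
    (∏ a, f a (move L η ℓ k a)) * v ℓ (η ℓ - 1) = (∏ a, f a (η a)) * v k (η k) := by
  -- `η` and `move L η ℓ k` both arise from `ζ` by adding one particle, at `ℓ` and at `k`.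
  set ζ : ZMod L → ℕ := Function.update η ℓ (η ℓ - 1) with hζ
  have hζk : ζ k = η k := Function.update_of_ne hkℓ _ _
  have hζℓ : ζ ℓ = η ℓ - 1 := Function.update_self _ _ _
  have hη : η = Function.update ζ ℓ (ζ ℓ + 1) := by
    simp [hζ, Nat.sub_add_cancel hℓ]
  have hmove : move L η ℓ k = Function.update ζ k (ζ k + 1) := by
    funext a
    grind [move, Function.update_apply]
  calc (∏ a, f a (move L η ℓ k a)) * v ℓ (η ℓ - 1)
      = (∏ a, f a (ζ a)) * v k (ζ k) * v ℓ (ζ ℓ) := by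
        rw [hmove, prod_update_add_one hf, hζℓ]
    _ = (∏ a, f a (ζ a)) * v ℓ (ζ ℓ) * v k (ζ k) := mul_right_comm _ _ _
    _ = (∏ a, f a (η a)) * v k (η k) := by
        rw [← prod_update_add_one hf, ← hη, hζk]

end ProductWeight

section Balance

variable {L : ℕ} [NeZero L] {u : ℕ → ℕ → ℝ} {φ : ℕ → ℝ}

theorem hopRate_zero_asymmetry (huφ : ∀ m n : ℕ, 1 ≤ m → u m n = φ n) (x : ZMod L → ℝ)
    (η : ZMod L → ℕ) (k ℓ : ZMod L) :
    hopRate L u x 0 η k ℓ = if k ∈ prevOccupied L η ℓ then x ℓ * φ (η ℓ) else 0 := by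
  simp only [hopRate, zero_mul, ite_self, add_zero, mem_prevOccupied, and_assoc]
  refine ite_congr rfl (fun h => ?_) fun _ => rfl
  rw [huφ _ _ h.2.1]

theorem outflow_eq_sum_card_prevOccupied (huφ : ∀ m n : ℕ, 1 ≤ m → u m n = φ n)
    (x : ZMod L → ℝ) (π : (ZMod L → ℕ) → ℝ) (η : ZMod L → ℕ) :
    outflow L u x 0 π η =
      ∑ a, (prevOccupied L η a).card • (π η * (x a * φ (η a))) := by
  rw [outflow, Finset.sum_comm]
  simp [hopRate_zero_asymmetry huφ, Finset.sum_ite_mem]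

theorem inflow_eq_sum_card_nextOccupied (huφ : ∀ m n : ℕ, 1 ≤ m → u m n = φ n)
    {x : ZMod L → ℝ} {π : (ZMod L → ℕ) → ℝ} {η : ZMod L → ℕ}
    (hπ : ∀ k ℓ, k ≠ ℓ → 1 ≤ η ℓ →
      π (move L η ℓ k) * (x ℓ * φ (η ℓ - 1)) = π η * (x k * φ (η k))) :
    inflow L u x 0 π η =
      ∑ a, (nextOccupied L η a).card • (π η * (x a * φ (η a))) := by
  have current_eq (k ℓ : ZMod L) :
      (if 1 ≤ η ℓ then π (move L η ℓ k) * hopRate L u x 0 (move L η ℓ k) k ℓ else 0) =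
        if ℓ ∈ nextOccupied L η k then π η * (x k * φ (η k)) else 0 := by
    rw [hopRate_zero_asymmetry huφ, move_apply_source, mul_ite, mul_zero, ← ite_and]
    simp only [mem_prevOccupied_move, mem_nextOccupied]
    refine ite_congr (by grind) (fun h => hπ k ℓ h.1.1.symm h.1.2) fun _ => rfl
  simp [inflow, current_eq, Finset.sum_ite_mem]

theorem isStationary_of_move_mul_eq (huφ : ∀ m n : ℕ, 1 ≤ m → u m n = φ n)
    (N : ℕ) {x : ZMod L → ℝ} {π : (ZMod L → ℕ) → ℝ}
    (hπ : ∀ η : ZMod L → ℕ, ∑ a, η a = N → ∀ k ℓ, k ≠ ℓ → 1 ≤ η ℓ →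
      π (move L η ℓ k) * (x ℓ * φ (η ℓ - 1)) = π η * (x k * φ (η k))) :
    IsStationary L N u x 0 π := by
  intro η hη
  rw [inflow_eq_sum_card_nextOccupied huφ (hπ η hη), outflow_eq_sum_card_prevOccupied huφ]
  simp only [card_nextOccupied_eq_card_prevOccupied]

end Balance

/-- if `u (m, n) = φ n` for `m ≥ 1` (and `u (0, n) = 0`), then the
stationary distribution corresponding to `u` in the TALRMP (`q = 0`) is factorised
with one-point function `f (x, n) = x ^ n * ∏_{i=1}^{n} φ (i - 1)`. -/
theorem talrmp_factorised_of_zero_range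
    (u : ℕ → ℕ → ℝ) (hu : IsRate u)
    (φ : ℕ → ℝ) (hφ : ∀ n, 0 < φ n)
    (huφ : ∀ m n : ℕ, 1 ≤ m → u m n = φ n) :
    FactorisedPALRMP u 0 (fun x n => x ^ n * ∏ i ∈ Finset.range n, φ i) := by
  refine ⟨fun x n hx => mul_pos (pow_pos hx n) (Finset.prod_pos fun i _ => hφ i), ?_⟩
  intro L N _ _ _ x _
  refine isStationary_of_move_mul_eq huφ N fun η _ k ℓ hkℓ hℓ => ?_
  have one_point_succ (a : ZMod L) (n : ℕ) :
      x a ^ (n + 1) * ∏ i ∈ Finset.range (n + 1), φ i =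
        x a ^ n * (∏ i ∈ Finset.range n, φ i) * (x a * φ n) := by
    rw [pow_succ, Finset.prod_range_succ, mul_mul_mul_comm]
  exact prod_move_mul (f := fun a n => x a ^ n * ∏ i ∈ Finset.range n, φ i)
    (v := fun a n => x a * φ n) one_point_succ hkℓ hℓ

end LRMP
end

section
/- Suppose the stationary distribution corresponding to the rate function u is factorised in the TALRMP (q = 0). Then u(m,0) takes the same value for all m ≥ 1, and there exists a one-point function f corresponding to u satisfying f(x,n) = x^n · f(x,0) · ∏_{i=1}^{n} u(1,i−1) for all x > 0 and n ∈ ℕ. -/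
open scoped Classical

namespace LRMP

/-!
On two sites the configurations with `N` particles form a path, so a stationary weight has no
current through any edge: it is in detailed balance. Every hop there is at once clockwise and
counterclockwise, so all rates carry a factor `1 + q`, whence the condition `q ≠ -1`.

On three sites with content `(m + 1, n + 1, 0)`, the exchanges between the two occupied sites cancel
by detailed balance. What is left involves only the hops into or out of the empty site and reads
`(1 - q) * (u (m + 1) 0 - u (n + 1) 0) = 0`.

Detailed balance with one of the two sites nearly empty is then a first-order recursion for
`f x n` in `n`. It fixes `f x` up to `f x 0` and a geometric factor `c ^ n` with `c` independent of
`x`; since the particle number is conserved, that factor can be removed without losing stationarity.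
-/

variable {L : ℕ} {u : ℕ → ℕ → ℝ} {q : ℝ}

theorem sum_move [NeZero L] {η : ZMod L → ℕ} {k ℓ : ZMod L} (hkℓ : k ≠ ℓ) (hk : 1 ≤ η k) :
    ∑ a, move L η k ℓ a = ∑ a, η a := by
  have hpoint (a : ZMod L) :
      move L η k ℓ a + (if a = k then 1 else 0) = η a + if a = ℓ then 1 else 0 := by
    unfold move
    grind
  have hsum := Fintype.sum_congr _ _ hpoint
  simp only [Finset.sum_add_distrib, Finset.sum_ite_eq', Finset.mem_univ, if_true] at hsum
  exact Nat.add_right_cancel hsum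

theorem hopRate_self (x : ZMod L → ℝ) (η : ZMod L → ℕ) (k : ZMod L) :
    hopRate L u x q η k k = 0 := by
  simp [hopRate]

theorem rightClear_of_sub_eq_one (η : ZMod L → ℕ) {k ℓ : ZMod L} (h : ℓ - k = 1) :
    RightClear L η k ℓ := by
  intro i hi hi'
  rw [h, ZMod.val_one_eq_one_mod] at hi'
  have := Nat.mod_le 1 L
  omega

theorem rightClear_iff_of_sub_eq_two (hL : 2 < L) (η : ZMod L → ℕ) {k ℓ : ZMod L}
    (h : ℓ - k = 2) : RightClear L η k ℓ ↔ η (k + 1) = 0 := by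
  have hval : (ℓ - k).val = 2 := by rw [h, ZMod.val_two_eq_two_mod, Nat.mod_eq_of_lt hL]
  unfold RightClear
  rw [hval]
  refine ⟨fun hclear => by simpa using hclear 1 one_pos one_lt_two, fun hempty i hi hi' => ?_⟩
  obtain rfl : i = 1 := by omega
  simpa using hempty

theorem leftClear_iff_rightClear_neg (η : ZMod L → ℕ) (k ℓ : ZMod L) :
    LeftClear L η k ℓ ↔ RightClear L (fun a => η (-a)) (-k) (-ℓ) := by
  simp only [LeftClear, RightClear, neg_sub_neg, neg_add, neg_neg, ← sub_eq_add_neg]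

theorem leftClear_of_sub_eq_one (η : ZMod L → ℕ) {k ℓ : ZMod L} (h : k - ℓ = 1) :
    LeftClear L η k ℓ :=
  (leftClear_iff_rightClear_neg η k ℓ).2 (rightClear_of_sub_eq_one _ (by rwa [neg_sub_neg]))

theorem leftClear_iff_of_sub_eq_two (hL : 2 < L) (η : ZMod L → ℕ) {k ℓ : ZMod L}
    (h : k - ℓ = 2) : LeftClear L η k ℓ ↔ η (k - 1) = 0 := by
  rw [leftClear_iff_rightClear_neg, rightClear_iff_of_sub_eq_two hL _ (by rwa [neg_sub_neg]),
    neg_add, neg_neg, sub_eq_add_neg]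

theorem IsStationary.of_eq_const_mul [NeZero L] {N : ℕ} {x : ZMod L → ℝ}
    {π π' : (ZMod L → ℕ) → ℝ} (hπ : IsStationary L N u x q π) (c : ℝ)
    (hπ' : ∀ η : ZMod L → ℕ, ∑ a, η a = N → π' η = c * π η) :
    IsStationary L N u x q π' := by
  intro η hη
  have inflow_eq : inflow L u x q π' η = c * inflow L u x q π η := by
    simp only [inflow, Finset.mul_sum]
    refine Finset.sum_congr rfl fun k _ => Finset.sum_congr rfl fun ℓ _ => ?_
    rcases eq_or_ne ℓ k with rfl | hℓk
    · simp only [hopRate_self, mul_zero, ite_self]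
    · split_ifs with hℓ
      · rw [hπ' _ ((sum_move hℓk hℓ).trans hη), mul_assoc]
      · rw [mul_zero]
  have outflow_eq : outflow L u x q π' η = c * outflow L u x q π η := by
    simp only [outflow, Finset.mul_sum, hπ' η hη, mul_assoc]
  rw [inflow_eq, outflow_eq, hπ η hη]

theorem FactorisedPALRMP.pow_mul {f : ℝ → ℕ → ℝ} (hf : FactorisedPALRMP u q f)
    {c : ℝ} (hc : 0 < c) : FactorisedPALRMP u q fun x n => c ^ n * f x n := by
  refine ⟨fun x n hx => mul_pos (pow_pos hc n) (hf.1 x n hx), fun L N _ hL hN x hx => ?_⟩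
  refine (hf.2 L N hL hN x hx).of_eq_const_mul (c ^ N) fun η hη => ?_
  rw [Finset.prod_mul_distrib, Finset.prod_pow_eq_pow_sum, hη]

theorem FactorisedPALRMP.homog {f : ℝ → ℕ → ℝ} (hf : FactorisedPALRMP u q f) :
    FactorisedHomog u q (f 1) :=
  ⟨fun n => hf.1 1 n one_pos, fun L N _ hL hN => hf.2 L N hL hN _ fun _ => one_pos⟩

section TwoSites

/-- The family on the ring `ZMod 2` with values `a`, `b` at the sites `0`, `1`, used to write down
both configurations of two sites and their rate parameters. -/
def twoSites {α : Type*} (a b : α) : ZMod 2 → α := ![a, b]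

@[simp]
theorem twoSites_zero {α : Type*} (a b : α) : twoSites a b 0 = a := rfl

@[simp]
theorem twoSites_one {α : Type*} (a b : α) : twoSites a b 1 = b := rfl

theorem sum_zmod_two {M : Type*} [AddCommMonoid M] (F : ZMod 2 → M) : ∑ k, F k = F 0 + F 1 :=
  Fin.sum_univ_two F

theorem prod_zmod_two {M : Type*} [CommMonoid M] (F : ZMod 2 → M) : ∏ k, F k = F 0 * F 1 :=
  Fin.prod_univ_two F

theorem move_two_zero_one (m n : ℕ) :
    move 2 (twoSites m n) 0 1 = twoSites (m - 1) (n + 1) := by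
  ext a; fin_cases a <;> rfl

theorem move_two_one_zero (m n : ℕ) :
    move 2 (twoSites m n) 1 0 = twoSites (m + 1) (n - 1) := by
  ext a; fin_cases a <;> rfl

theorem hopRate_two (x : ZMod 2 → ℝ) (η : ZMod 2 → ℕ) {k ℓ : ZMod 2} (hkℓ : k ≠ ℓ) :
    hopRate 2 u x q η k ℓ = if 1 ≤ η k then (1 + q) * (x ℓ * u (η k) (η ℓ)) else 0 := by
  have hright : RightClear 2 η k ℓ := fun i _ _ => by have := ZMod.val_lt (ℓ - k); omega
  have hleft : LeftClear 2 η k ℓ := fun i _ _ => by have := ZMod.val_lt (k - ℓ); omega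
  unfold hopRate
  grind

theorem inflow_two (x : ZMod 2 → ℝ) (π : (ZMod 2 → ℕ) → ℝ) (m n : ℕ) :
    inflow 2 u x q π (twoSites m n) = (1 + q) *
      ((if 1 ≤ n then π (twoSites (m + 1) (n - 1)) * (x 1 * u (m + 1) (n - 1)) else 0) +
        if 1 ≤ m then π (twoSites (m - 1) (n + 1)) * (x 0 * u (n + 1) (m - 1)) else 0) := by
  simp [inflow, sum_zmod_two, hopRate_self, hopRate_two, move_two_zero_one, move_two_one_zero,
    mul_add, mul_left_comm]

theorem outflow_two (x : ZMod 2 → ℝ) (π : (ZMod 2 → ℕ) → ℝ) (m n : ℕ) :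
    outflow 2 u x q π (twoSites m n) = (1 + q) * (π (twoSites m n) *
      ((if 1 ≤ m then x 1 * u m n else 0) + if 1 ≤ n then x 0 * u n m else 0)) := by
  have hop₀₁ : hopRate 2 u x q (twoSites m n) 0 1 =
      if 1 ≤ m then (1 + q) * (x 1 * u m n) else 0 := hopRate_two x _ (by decide)
  have hop₁₀ : hopRate 2 u x q (twoSites m n) 1 0 =
      if 1 ≤ n then (1 + q) * (x 0 * u n m) else 0 := hopRate_two x _ (by decide)
  simp only [outflow, sum_zmod_two, hopRate_self, hop₀₁, hop₁₀]
  split_ifs <;> ring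

theorem IsStationary.detailedBalance_two {x : ZMod 2 → ℝ} {π : (ZMod 2 → ℕ) → ℝ} (hq : q ≠ -1)
    {N : ℕ} (hπ : IsStationary 2 N u x q π) {m n : ℕ} (hN : m + n + 1 = N) :
    π (twoSites (m + 1) n) * (x 1 * u (m + 1) n) =
      π (twoSites m (n + 1)) * (x 0 * u (n + 1) m) := by
  have hq' : 1 + q ≠ 0 := fun h => hq (eq_neg_of_add_eq_zero_right h)
  induction m generalizing n with
  | zero =>
    have balance := hπ (twoSites 0 (n + 1)) (by simp [sum_zmod_two]; omega)
    rw [inflow_two, outflow_two, mul_right_inj' hq'] at balance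
    simpa using balance
  | succ m ih =>
    have balance := hπ (twoSites (m + 1) (n + 1)) (by simp [sum_zmod_two]; omega)
    rw [inflow_two, outflow_two, mul_right_inj' hq'] at balance
    simp only [le_add_iff_nonneg_left, zero_le, if_true, add_tsub_cancel_right] at balance
    linarith [@ih (n + 1) (by omega)]

end TwoSites

section ThreeSites

/-- The family on the ring `ZMod 3` with values `a`, `b`, `c` at the sites `0`, `1`, `2`, used to
write down configurations of three sites. -/
def threeSites {α : Type*} (a b c : α) : ZMod 3 → α := ![a, b, c]

@[simp]
theorem threeSites_zero {α : Type*} (a b c : α) : threeSites a b c 0 = a := rfl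

@[simp]
theorem threeSites_one {α : Type*} (a b c : α) : threeSites a b c 1 = b := rfl

@[simp]
theorem threeSites_two {α : Type*} (a b c : α) : threeSites a b c 2 = c := rfl

theorem sum_zmod_three {M : Type*} [AddCommMonoid M] (F : ZMod 3 → M) :
    ∑ k, F k = F 0 + F 1 + F 2 :=
  Fin.sum_univ_three F

theorem prod_zmod_three {M : Type*} [CommMonoid M] (F : ZMod 3 → M) :
    ∏ k, F k = F 0 * F 1 * F 2 :=
  Fin.prod_univ_three F

theorem sum_sum_zmod_three {M : Type*} [AddCommMonoid M] (F : ZMod 3 → ZMod 3 → M) :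
    ∑ k, ∑ ℓ, F k ℓ = ∑ k, (F k k + F k (k + 1) + F k (k + 2)) := by
  refine Fintype.sum_congr _ _ fun k => ?_
  rw [← Equiv.sum_comp (Equiv.addLeft k), sum_zmod_three]
  simp

theorem hopRate_three_add_one (x : ZMod 3 → ℝ) (η : ZMod 3 → ℕ) (k : ZMod 3) :
    hopRate 3 u x q η k (k + 1) =
      if 1 ≤ η k then
        (1 + if η (k + 2) = 0 then q else 0) * (x (k + 1) * u (η k) (η (k + 1))) else 0 := by
  have hne : k ≠ k + 1 := by simp
  have hright : RightClear 3 η k (k + 1) := rightClear_of_sub_eq_one η (by ring)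
  have hleft : LeftClear 3 η k (k + 1) ↔ η (k + 2) = 0 := by
    rw [leftClear_iff_of_sub_eq_two (by omega) η (by rw [sub_add_cancel_left]; rfl),
      sub_eq_add_neg, show (-1 : ZMod 3) = 2 from rfl]
  simp only [hopRate, hright, hleft]
  split_ifs <;> grind

theorem hopRate_three_add_two (x : ZMod 3 → ℝ) (η : ZMod 3 → ℕ) (k : ZMod 3) :
    hopRate 3 u x q η k (k + 2) =
      if 1 ≤ η k then
        ((if η (k + 1) = 0 then 1 else 0) + q) * (x (k + 2) * u (η k) (η (k + 2))) else 0 := by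
  have hne : k ≠ k + 2 := by simpa using show (2 : ZMod 3) ≠ 0 by decide
  have hright : RightClear 3 η k (k + 2) ↔ η (k + 1) = 0 :=
    rightClear_iff_of_sub_eq_two (by omega) η (by ring)
  have hleft : LeftClear 3 η k (k + 2) :=
    leftClear_of_sub_eq_one η (by rw [sub_add_cancel_left]; rfl)
  simp only [hopRate, hright, hleft]
  split_ifs <;> grind

theorem outflow_three (m n : ℕ) (x : ZMod 3 → ℝ) (π : (ZMod 3 → ℕ) → ℝ) :
    outflow 3 u x q π (threeSites (m + 1) (n + 1) 0) = π (threeSites (m + 1) (n + 1) 0) *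
      ((1 + q) * (x 1 * u (m + 1) (n + 1) + x 0 * u (n + 1) (m + 1)) +
        x 2 * (u (n + 1) 0 + q * u (m + 1) 0)) := by
  have one_add_one : (1 : ZMod 3) + 1 = 2 := rfl
  have one_add_two : (1 : ZMod 3) + 2 = 0 := rfl
  simp only [outflow, sum_sum_zmod_three, hopRate_self, hopRate_three_add_one,
    hopRate_three_add_two]
  simp only [sum_zmod_three, threeSites_zero, threeSites_one, threeSites_two,
    zero_add, one_add_one, one_add_two, le_add_iff_nonneg_left, zero_le, nonpos_iff_eq_zero,
    Nat.add_eq_zero_iff, one_ne_zero, and_false, if_true, if_false]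
  ring

theorem inflow_three (m n : ℕ) (x : ZMod 3 → ℝ) (π : (ZMod 3 → ℕ) → ℝ) :
    inflow 3 u x q π (threeSites (m + 1) (n + 1) 0) =
      (1 + q) * (π (threeSites (m + 2) n 0) * (x 1 * u (m + 2) n) +
        π (threeSites m (n + 2) 0) * (x 0 * u (n + 2) m)) +
      (π (threeSites m (n + 1) 1) * (x 0 * u 1 m) +
        q * (π (threeSites (m + 1) n 1) * (x 1 * u 1 n))) := by
  have move₀₁ : move 3 (threeSites (m + 1) (n + 1) 0) 0 1 = threeSites m (n + 2) 0 := by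
    ext a; fin_cases a <;> rfl
  have move₁₀ : move 3 (threeSites (m + 1) (n + 1) 0) 1 0 = threeSites (m + 2) n 0 := by
    ext a; fin_cases a <;> rfl
  have move₀₂ : move 3 (threeSites (m + 1) (n + 1) 0) 0 2 = threeSites m (n + 1) 1 := by
    ext a; fin_cases a <;> rfl
  have move₁₂ : move 3 (threeSites (m + 1) (n + 1) 0) 1 2 = threeSites (m + 1) n 1 := by
    ext a; fin_cases a <;> rfl
  have one_add_one : (1 : ZMod 3) + 1 = 2 := rfl
  have one_add_two : (1 : ZMod 3) + 2 = 0 := rfl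
  have two_add_one : (2 : ZMod 3) + 1 = 0 := rfl
  have two_add_two : (2 : ZMod 3) + 2 = 1 := rfl
  simp only [inflow, sum_sum_zmod_three, hopRate_self, mul_zero, ite_self, hopRate_three_add_one,
    hopRate_three_add_two]
  simp only [sum_zmod_three, zero_add, one_add_one, one_add_two, two_add_one,
    two_add_two, move₀₁, move₁₀, move₀₂, move₁₂, threeSites_zero, threeSites_one, threeSites_two,
    le_add_iff_nonneg_left, zero_le, nonpos_iff_eq_zero, le_refl,
    Nat.add_eq_zero_iff, one_ne_zero, and_false, if_true, if_false]
  ring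

end ThreeSites

theorem FactorisedHomog.detailedBalance {g : ℕ → ℝ} (hg : FactorisedHomog u q g) (hq : q ≠ -1)
    (m n : ℕ) : g (m + 1) * g n * u (m + 1) n = g m * g (n + 1) * u (n + 1) m := by
  simpa [prod_zmod_two] using
    (hg.2 2 (m + n + 1) le_rfl (by omega)).detailedBalance_two hq (m := m) (n := n) rfl

theorem FactorisedPALRMP.detailedBalance {f : ℝ → ℕ → ℝ} (hf : FactorisedPALRMP u q f)
    (hq : q ≠ -1) {a b : ℝ} (ha : 0 < a) (hb : 0 < b) (m n : ℕ) :
    f a (m + 1) * f b n * (b * u (m + 1) n) = f a m * f b (n + 1) * (a * u (n + 1) m) := by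
  have hpos : ∀ ℓ, 0 < twoSites a b ℓ := by intro ℓ; fin_cases ℓ <;> assumption
  simpa [prod_zmod_two] using
    (hf.2 2 (m + n + 1) le_rfl (by omega) _ hpos).detailedBalance_two hq (m := m) (n := n) rfl

theorem FactorisedHomog.rate_zero_eq {g : ℕ → ℝ} (hg : FactorisedHomog u q g) (hq : q ≠ -1)
    (hq₁ : q ≠ 1) {m n : ℕ} (hm : 1 ≤ m) (hn : 1 ≤ n) : u m 0 = u n 0 := by
  obtain ⟨m, rfl⟩ := Nat.exists_eq_add_of_le' hm
  obtain ⟨n, rfl⟩ := Nat.exists_eq_add_of_le' hn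
  have balance := hg.2 3 (m + n + 2) (by omega) (by omega) (threeSites (m + 1) (n + 1) 0)
    (by simp [sum_zmod_three]; omega)
  simp only [inflow_three, outflow_three, prod_zmod_three, threeSites_zero, threeSites_one,
    threeSites_two, one_mul] at balance
  have detailed₀₁ := hg.detailedBalance hq m (n + 1)
  have detailed₁₀ := hg.detailedBalance hq (m + 1) n
  have detailed₀₂ := hg.detailedBalance hq m 0
  have detailed₁₂ := hg.detailedBalance hq n 0
  have emptySite_balance :
      g m * g (n + 1) * g 1 * u 1 m + q * (g (m + 1) * g n * g 1 * u 1 n) =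
        g (m + 1) * g (n + 1) * g 0 * (u (n + 1) 0 + q * u (m + 1) 0) := by
    linear_combination balance + (1 + q) * g 0 * (detailed₀₁ - detailed₁₀)
  have hdiff : (1 - q) * (g (m + 1) * g (n + 1) * g 0) * (u (m + 1) 0 - u (n + 1) 0) = 0 := by
    linear_combination emptySite_balance + g (n + 1) * detailed₀₂ + q * g (m + 1) * detailed₁₂
  have hweight : (1 - q) * (g (m + 1) * g (n + 1) * g 0) ≠ 0 :=
    mul_ne_zero (sub_ne_zero.2 hq₁.symm)
      (mul_pos (mul_pos (hg.1 _) (hg.1 _)) (hg.1 0)).ne'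
  exact sub_eq_zero.1 ((mul_eq_zero.1 hdiff).resolve_left hweight)

theorem FactorisedPALRMP.eq_pow_mul_prod {f : ℝ → ℕ → ℝ} (hf : FactorisedPALRMP u q f)
    (hq : q ≠ -1) (h₀ : u 1 0 ≠ 0) (hu : ∀ n, u (n + 1) 0 = u 1 0) {x : ℝ} (hx : 0 < x) (n : ℕ) :
    f x n = (f 1 1 / (u 1 0 * f 1 0)) ^ n * (x ^ n * f x 0 * ∏ i ∈ Finset.range n, u 1 i) := by
  have hf₀ : f 1 0 ≠ 0 := (hf.1 1 0 one_pos).ne'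
  have succ_eq (n : ℕ) : f x (n + 1) = f 1 1 / (u 1 0 * f 1 0) * (x * u 1 n * f x n) := by
    have balance := hf.detailedBalance hq one_pos hx 0 n
    rw [hu n, zero_add, one_mul] at balance
    field_simp
    linarith
  induction n with
  | zero => simp
  | succ n ih =>
    rw [succ_eq, ih, Finset.prod_range_succ]
    ring

theorem talrmp_onepoint_form_general (u : ℕ → ℕ → ℝ) (hu : IsRate u) {q : ℝ} (hq : q ≠ -1)
    (hq₁ : q ≠ 1) (h : ∃ f : ℝ → ℕ → ℝ, FactorisedPALRMP u q f) :
    (∀ m m' : ℕ, 1 ≤ m → 1 ≤ m' → u m 0 = u m' 0) ∧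
    ∃ f : ℝ → ℕ → ℝ, FactorisedPALRMP u q f ∧
      ∀ (x : ℝ) (n : ℕ), 0 < x →
        f x n = x ^ n * f x 0 * ∏ i ∈ Finset.range n, u 1 i := by
  obtain ⟨f, hf⟩ := h
  have hconst {m n : ℕ} (hm : 1 ≤ m) (hn : 1 ≤ n) : u m 0 = u n 0 :=
    hf.homog.rate_zero_eq hq hq₁ hm hn
  have hu₀ : 0 < u 1 0 := hu.1 1 0 le_rfl
  have hc : 0 < f 1 1 / (u 1 0 * f 1 0) :=
    div_pos (hf.1 1 1 one_pos) (mul_pos hu₀ (hf.1 1 0 one_pos))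
  refine ⟨fun _ _ => hconst, _, hf.pow_mul (inv_pos.2 hc), fun x n hx => ?_⟩
  rw [hf.eq_pow_mul_prod hq hu₀.ne' (fun n => hconst n.succ_pos le_rfl) hx n, inv_pow,
    inv_mul_cancel_left₀ (pow_pos hc n).ne', pow_zero, one_mul]

/-- if the stationary distribution corresponding to `u` is factorised in
the TALRMP (`q = 0`), then `u (m, 0)` is constant for `m ≥ 1` and some one-point
function `f` for `u` satisfies `f (x, n) = x ^ n * f (x, 0) * ∏_{i=1}^{n} u (1, i-1)`. -/
theorem talrmp_onepoint_form
    (u : ℕ → ℕ → ℝ) (hu : IsRate u)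
    (h : ∃ f : ℝ → ℕ → ℝ, FactorisedPALRMP u 0 f) :
    (∀ m m' : ℕ, 1 ≤ m → 1 ≤ m' → u m 0 = u m' 0) ∧
    ∃ f : ℝ → ℕ → ℝ, FactorisedPALRMP u 0 f ∧
      ∀ (x : ℝ) (n : ℕ), 0 < x →
        f x n = x ^ n * f x 0 * ∏ i ∈ Finset.range n, u 1 i :=
  talrmp_onepoint_form_general u hu (by norm_num) zero_ne_one h

end LRMP
end
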